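/- Let F = F_{2^n} with n ≥ 5 odd, and let f: F → F be a function such that both x ↦ f(x)^3 + x^3 and x ↦ f(x)^5 + x^5 are additive (F_2-linear) maps. Then f(x) = x for all x ∈ F. -/

import Mathlib

open Polynomial Finset

/-- A polynomial of degree less than the size of a finite field is determined by its values. -/
theorem Polynomial.eq_zero_of_forall_eval_eq_zero {F : Type*} [Field F] [Finite F] (P : F[X])
    (hdeg : P.natDegree < Nat.card F) (h : ∀ x, P.eval x = 0) : P = 0 := by
  have := Fintype.ofFinite F
  rw [Nat.card_eq_fintype_card] at hdeg
  exact eq_zero_of_natDegree_lt_card_of_eval_eq_zero P Function.injective_id h hdeg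

section Linearized

variable (K L : Type*) [Field K] [Fintype K] [Field L] [Algebra K L]

theorem FiniteField.linearIndependent_frobeniusAlgHom_pow [Finite L] :
    LinearIndependent L fun i : Fin (Module.finrank K L) ↦
      (FiniteField.frobeniusAlgHom K L ^ i.1).toLinearMap :=
  (linearIndependent_algHom_toLinearMap K L L).comp _
    (FiniteField.bijective_frobeniusAlgHom_pow K L).1

variable {L}

theorem FiniteField.sum_smul_frobeniusAlgHom_pow_apply (c : Fin (Module.finrank K L) → L) (x : L) :
    (∑ i, c i • (FiniteField.frobeniusAlgHom K L ^ i.1).toLinearMap) x =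
      ∑ i, c i * x ^ Fintype.card K ^ i.1 := by
  simp [LinearMap.sum_apply, AlgHom.coe_pow, FiniteField.coe_frobeniusAlgHom, pow_iterate]

/-- The coefficients of a linearized polynomial are determined by its values. -/
theorem FiniteField.linearized_coeff_eq_zero [Finite L] (c : ℕ → L)
    (h : ∀ x, ∑ i ∈ range (Module.finrank K L), c i * x ^ Fintype.card K ^ i = 0) :
    ∀ i < Module.finrank K L, c i = 0 := by
  intro i hi
  refine Fintype.linearIndependent_iff.1 (linearIndependent_frobeniusAlgHom_pow K L)
    (fun i ↦ c i) (LinearMap.ext fun x ↦ ?_) ⟨i, hi⟩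
  rw [sum_smul_frobeniusAlgHom_pow_apply,
    Fin.sum_univ_eq_sum_range fun i ↦ c i * x ^ Fintype.card K ^ i, h, LinearMap.zero_apply]

/-- Every linear endomorphism of a finite field is a linearized polynomial. -/
theorem FiniteField.exists_linearized [Finite L] (g : L →ₗ[K] L) :
    ∃ c : ℕ → L, ∀ x,
      g x = ∑ i ∈ range (Module.finrank K L), c i * x ^ Fintype.card K ^ i := by
  have hspan := (linearIndependent_frobeniusAlgHom_pow K L).span_eq_top_of_card_eq_finrank'
    (by rw [Fintype.card_fin, Module.finrank_linearMap_self])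
  obtain ⟨c, hc⟩ := (Submodule.mem_span_range_iff_exists_fun L).1
    (hspan ▸ Submodule.mem_top : g ∈ _)
  refine ⟨fun i ↦ if h : i < Module.finrank K L then c ⟨i, h⟩ else 0, fun x ↦ ?_⟩
  rw [← hc, sum_smul_frobeniusAlgHom_pow_apply, ← Fin.sum_univ_eq_sum_range (fun i ↦
    (if h : i < Module.finrank K L then c ⟨i, h⟩ else 0) * x ^ Fintype.card K ^ i)]
  simp

end Linearized

/-- Polarization of a cubic identity between products of additive functions. -/
theorem polarization_of_cubic_identity {A R : Type*} [Add A] [CommRing R]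
    {a b c d g k h l : A → R}
    (ha : ∀ x y, a (x + y) = a x + a y) (hb : ∀ x y, b (x + y) = b x + b y)
    (hc : ∀ x y, c (x + y) = c x + c y) (hd : ∀ x y, d (x + y) = d x + d y)
    (hg : ∀ x y, g (x + y) = g x + g y) (hk : ∀ x y, k (x + y) = k x + k y)
    (hh : ∀ x y, h (x + y) = h x + h y) (hl : ∀ x y, l (x + y) = l x + l y)
    (key : ∀ x, d x * c x * g x + a x * b x * k x + g x * k x =
      d x * b x * h x + a x * c x * l x + h x * l x) (x y z : A) :
    (c y * d z + d y * c z) * g x + (a y * b z + b y * a z) * k x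
      - (b y * d z + d y * b z) * h x - (a y * c z + c y * a z) * l x
      + ((b y * k z + b z * k y - c y * l z - c z * l y) * a x
      + (a y * k z + a z * k y - d y * h z - d z * h y) * b x
      + (d y * g z + d z * g y - a y * l z - a z * l y) * c x
      + (c y * g z + c z * g y - b y * h z - b z * h y) * d x) = 0 := by
  have hxyz := key (x + y + z)
  have hxy := key (x + y)
  have hxz := key (x + z)
  have hyz := key (y + z)
  simp only [ha, hb, hc, hd, hg, hk, hh, hl] at hxyz hxy hxz hyz
  linear_combination hxyz - hxy - hxz - hyz + key x + key y + key z

theorem two_term_coeff_eq_zero {F : Type*} [Field F] [Finite F] (hcard : 32 ≤ Nat.card F) {u v : F}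
    (h : ∀ y, u * y ^ 4 - v * y ^ 2 = 0) : u = 0 ∧ v = 0 := by
  have hP := Polynomial.eq_zero_of_forall_eval_eq_zero (C u * X ^ 4 - C v * X ^ 2)
    (lt_of_le_of_lt (by compute_degree) (show 4 < Nat.card F by lia)) (by simpa using h)
  constructor
  · simpa [coeff_X_pow, -map_mul] using congr_arg (coeff · 4) hP
  · simpa [coeff_X_pow, -map_mul] using congr_arg (coeff · 2) hP

theorem polarized_coeff_eq_zero {F : Type*} [Field F] [Finite F] (hcard : 32 ≤ Nat.card F)
    {p q r s : F}
    (h : ∀ y z : F, p * (y ^ 4 * z ^ 8 + y ^ 8 * z ^ 4) + q * (y * z ^ 2 + y ^ 2 * z)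
      - r * (y ^ 2 * z ^ 8 + y ^ 8 * z ^ 2) - s * (y * z ^ 4 + y ^ 4 * z) = 0) :
    p = 0 ∧ q = 0 ∧ r = 0 ∧ s = 0 := by
  have hP (y : F) := Polynomial.eq_zero_of_forall_eval_eq_zero
    (C (p * y ^ 4 - r * y ^ 2) * X ^ 8 + C (p * y ^ 8 - s * y) * X ^ 4
      + C (q * y - r * y ^ 8) * X ^ 2 + C (q * y ^ 2 - s * y ^ 4) * X)
    (lt_of_le_of_lt (by compute_degree) (show 8 < Nat.card F by lia)) fun z ↦ by
      simp only [eval_add, eval_mul, eval_C, eval_pow, eval_X]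
      linear_combination h y z
  have h8 := two_term_coeff_eq_zero hcard (u := p) (v := r) fun y ↦ by
    simpa [coeff_X_pow, coeff_X, coeff_C_mul, -map_mul, -map_sub] using congr_arg (coeff · 8) (hP y)
  have h1 := two_term_coeff_eq_zero hcard (u := s) (v := q) fun y ↦ by
    have := congr_arg (coeff · 1) (hP y)
    simp only [coeff_add, coeff_C_mul, coeff_X_pow, coeff_X, coeff_zero] at this
    norm_num at this
    linear_combination -this
  exact ⟨h8.1, h1.2, h8.2, h1.1⟩

section Binary

variable {F : Type*} [Field F] [Finite F] [Algebra (ZMod 2) F]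

theorem exists_linearized_of_additive {g : F → F} (hg : ∀ x y, g (x + y) = g x + g y) :
    ∃ c : ℕ → F, ∀ x, g x = ∑ i ∈ range (Module.finrank (ZMod 2) F), c i * x ^ 2 ^ i := by
  simpa [ZMod.card] using FiniteField.exists_linearized (ZMod 2)
    ((AddMonoidHom.mk' g hg).toZModLinearMap 2)

/-- Adding a linearized polynomial with low exponents does not affect the high coefficients. -/
theorem linearized_coeff_eq_zero_of_add_low {m : ℕ} (hm : m ≤ Module.finrank (ZMod 2) F)
    (c a : ℕ → F)
    (h : ∀ x, ∑ i ∈ range (Module.finrank (ZMod 2) F), c i * x ^ 2 ^ i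
      + ∑ i ∈ range m, a i * x ^ 2 ^ i = 0) {i : ℕ} (hi : m ≤ i)
    (hin : i < Module.finrank (ZMod 2) F) : c i = 0 := by
  have key := FiniteField.linearized_coeff_eq_zero (ZMod 2)
    (fun i ↦ c i + if i < m then a i else 0) (fun x ↦ ?_) i hin
  · simpa [hi.not_gt] using key
  · have hlow : ∑ i ∈ range m, a i * x ^ 2 ^ i = ∑ i ∈ range (Module.finrank (ZMod 2) F),
        (if i < m then a i else 0) * x ^ 2 ^ i := by
      rw [← sum_subset (range_subset_range.2 hm) fun i _ hi ↦ by simp [mem_range.not.1 hi]]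
      exact sum_congr rfl fun i hi ↦ by rw [if_pos (mem_range.1 hi)]
    refine Eq.trans ?_ (h x)
    rw [hlow, ← sum_add_distrib]
    simp [ZMod.card, add_mul]

/-- Additive solutions `g`, `k`, `h`, `l` of the cubic identity are linearized polynomials
of degree at most `8`. -/
theorem exists_low_degree_of_cubic_identity (hcard : 32 ≤ Nat.card F) {g k h l : F → F}
    (hg : ∀ x y, g (x + y) = g x + g y) (hk : ∀ x y, k (x + y) = k x + k y)
    (hh : ∀ x y, h (x + y) = h x + h y) (hl : ∀ x y, l (x + y) = l x + l y)
    (key : ∀ x, x ^ 12 * g x + x ^ 3 * k x + g x * k x =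
      x ^ 10 * h x + x ^ 5 * l x + h x * l x) :
    ∃ cg ck ch cl : ℕ → F,
      (∀ x, g x = cg 0 * x + cg 1 * x ^ 2 + cg 2 * x ^ 4 + cg 3 * x ^ 8) ∧
      (∀ x, k x = ck 0 * x + ck 1 * x ^ 2 + ck 2 * x ^ 4 + ck 3 * x ^ 8) ∧
      (∀ x, h x = ch 0 * x + ch 1 * x ^ 2 + ch 2 * x ^ 4 + ch 3 * x ^ 8) ∧
      ∀ x, l x = cl 0 * x + cl 1 * x ^ 2 + cl 2 * x ^ 4 + cl 3 * x ^ 8 := by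
  have : CharP F 2 := charP_of_injective_algebraMap (algebraMap (ZMod 2) F).injective 2
  have hn : 4 ≤ Module.finrank (ZMod 2) F := by
    rw [← FiniteField.pow_finrank_eq_natCard 2 F] at hcard
    have : 5 ≤ Module.finrank (ZMod 2) F :=
      (Nat.pow_le_pow_iff_right (a := 2) (by norm_num)).1 (by simpa using hcard)
    lia
  obtain ⟨cg, hcg⟩ := exists_linearized_of_additive hg
  obtain ⟨ck, hck⟩ := exists_linearized_of_additive hk
  obtain ⟨ch, hch⟩ := exists_linearized_of_additive hh
  obtain ⟨cl, hcl⟩ := exists_linearized_of_additive hl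
  have hpol := polarization_of_cubic_identity (a := fun x : F ↦ x) (b := fun x ↦ x ^ 2)
    (c := fun x ↦ x ^ 4) (d := fun x ↦ x ^ 8) (fun _ _ ↦ rfl) (fun x y ↦ add_pow_char_pow x y 2 1)
    (fun x y ↦ add_pow_char_pow x y 2 2) (fun x y ↦ add_pow_char_pow x y 2 3) hg hk hh hl
    fun x ↦ by linear_combination key x
  have hhigh (i : ℕ) (hi : 4 ≤ i) (hin : i < Module.finrank (ZMod 2) F) :=
    polarized_coeff_eq_zero hcard (p := cg i) (q := ck i) (r := ch i) (s := cl i) fun y z ↦ by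
      refine linearized_coeff_eq_zero_of_add_low hn (fun i ↦
        cg i * (y ^ 4 * z ^ 8 + y ^ 8 * z ^ 4) + ck i * (y * z ^ 2 + y ^ 2 * z)
          - ch i * (y ^ 2 * z ^ 8 + y ^ 8 * z ^ 2) - cl i * (y * z ^ 4 + y ^ 4 * z))
        (fun i ↦ if i = 0 then y ^ 2 * k z + z ^ 2 * k y - y ^ 4 * l z - z ^ 4 * l y
          else if i = 1 then y * k z + z * k y - y ^ 8 * h z - z ^ 8 * h y
          else if i = 2 then y ^ 8 * g z + z ^ 8 * g y - y * l z - z * l y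
          else y ^ 4 * g z + z ^ 4 * g y - y ^ 2 * h z - z ^ 2 * h y) (fun x ↦ ?_) hi hin
      rw [← hpol x y z, hcg x, hck x, hch x, hcl x]
      simp only [mul_sum, sum_range_succ (n := 3), sum_range_succ (n := 2),
        sum_range_succ (n := 1), sum_range_succ (n := 0), range_zero, sum_empty,
        ← sum_add_distrib, ← sum_sub_distrib]
      congr 1
      · exact sum_congr rfl fun i _ ↦ by ring
      · norm_num
  have hlow {g : F → F} {c : ℕ → F}
      (hc : ∀ x, g x = ∑ i ∈ range (Module.finrank (ZMod 2) F), c i * x ^ 2 ^ i)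
      (hz : ∀ i, 4 ≤ i → i < Module.finrank (ZMod 2) F → c i = 0) (x : F) :
      g x = c 0 * x + c 1 * x ^ 2 + c 2 * x ^ 4 + c 3 * x ^ 8 := by
    rw [hc, ← sum_subset (range_subset_range.2 hn) fun i hi hi4 ↦ by
      rw [hz i (by simpa using hi4) (by simpa using hi), zero_mul]]
    simp [sum_range_succ]
  exact ⟨cg, ck, ch, cl, hlow hcg fun i hi hin ↦ (hhigh i hi hin).1,
    hlow hck fun i hi hin ↦ (hhigh i hi hin).2.1,
    hlow hch fun i hi hin ↦ (hhigh i hi hin).2.2.1,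
    hlow hcl fun i hi hin ↦ (hhigh i hi hin).2.2.2⟩

/-- The only additive functions satisfying the identity that expresses
`(g + x ^ 3) ^ 5 = (h + x ^ 5) ^ 3` are zero. -/
theorem eq_zero_of_additive_of_cubic_identity (hcard : 32 ≤ Nat.card F) {g h : F → F}
    (hg : ∀ x y, g (x + y) = g x + g y) (hh : ∀ x y, h (x + y) = h x + h y)
    (key : ∀ x, x ^ 12 * g x + x ^ 3 * g x ^ 4 + g x ^ 5 =
      x ^ 10 * h x + x ^ 5 * h x ^ 2 + h x ^ 3) (x : F) : g x = 0 ∧ h x = 0 := by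
  have : CharP F 2 := charP_of_injective_algebraMap (algebraMap (ZMod 2) F).injective 2
  have add_sq (x y : F) : (x + y) ^ 2 = x ^ 2 + y ^ 2 := add_pow_char_pow x y 2 1
  have add_fourth (x y : F) : (x + y) ^ 4 = x ^ 4 + y ^ 4 := add_pow_char_pow x y 2 2
  obtain ⟨cg, ck, ch, cl, eg, ek, eh, el⟩ := exists_low_degree_of_cubic_identity hcard
    (k := fun x ↦ g x ^ 4) (l := fun x ↦ h x ^ 2) hg (fun x y ↦ by rw [hg, add_fourth]) hh
    (fun x y ↦ by rw [hh, add_sq]) fun x ↦ by linear_combination key x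
  have hsq := Polynomial.eq_zero_of_forall_eval_eq_zero
    (C (ch 3 ^ 2) * X ^ 16 + C (ch 2 ^ 2 - cl 3) * X ^ 8 + C (ch 1 ^ 2 - cl 2) * X ^ 4
      + C (ch 0 ^ 2 - cl 1) * X ^ 2 - C (cl 0) * X)
    (lt_of_le_of_lt (by compute_degree) (show 16 < Nat.card F by lia)) fun x ↦ by
      have := el x
      simp only [eh, add_sq] at this
      simp only [eval_add, eval_sub, eval_mul, eval_C, eval_pow, eval_X]
      linear_combination this
  have hch3 : ch 3 = 0 := by
    simpa [coeff_X_pow, coeff_X, coeff_C_mul, -map_mul, -map_add, -map_sub, -map_pow] using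
      congr_arg (coeff · 16) hsq
  have hcl3 : ch 2 ^ 2 - cl 3 = 0 := by
    simpa [coeff_X_pow, coeff_X, coeff_C_mul, -map_mul, -map_add, -map_sub, -map_pow] using
      congr_arg (coeff · 8) hsq
  have hcl1 : ch 0 ^ 2 - cl 1 = 0 := by
    simpa [coeff_X_pow, coeff_X, coeff_C_mul, -map_mul, -map_add, -map_sub, -map_pow] using
      congr_arg (coeff · 2) hsq
  have hcl0 : cl 0 = 0 := by
    simpa [coeff_X_pow, coeff_X, coeff_C_mul, -map_mul, -map_add, -map_sub, -map_pow] using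
      congr_arg (coeff · 1) hsq
  have hcg3 : cg 3 = 0 := by
    let R : F[X] := X ^ 12 * (C (cg 0) * X + C (cg 1) * X ^ 2 + C (cg 2) * X ^ 4)
      + X ^ 3 * (C (ck 0) * X + C (ck 1) * X ^ 2 + C (ck 2) * X ^ 4 + C (ck 3) * X ^ 8)
      + (C (cg 0) * X + C (cg 1) * X ^ 2 + C (cg 2) * X ^ 4 + C (cg 3) * X ^ 8)
        * (C (ck 0) * X + C (ck 1) * X ^ 2 + C (ck 2) * X ^ 4 + C (ck 3) * X ^ 8)
      - X ^ 10 * (C (ch 0) * X + C (ch 1) * X ^ 2 + C (ch 2) * X ^ 4 + C (ch 3) * X ^ 8)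
      - X ^ 5 * (C (cl 0) * X + C (cl 1) * X ^ 2 + C (cl 2) * X ^ 4 + C (cl 3) * X ^ 8)
      - (C (ch 0) * X + C (ch 1) * X ^ 2 + C (ch 2) * X ^ 4 + C (ch 3) * X ^ 8)
        * (C (cl 0) * X + C (cl 1) * X ^ 2 + C (cl 2) * X ^ 4 + C (cl 3) * X ^ 8)
    have hR : R.natDegree ≤ 18 := by
      dsimp only [R]
      compute_degree
    have hP := Polynomial.eq_zero_of_forall_eval_eq_zero (C (cg 3) * X ^ 20 + R)
      (lt_of_le_of_lt (natDegree_add_le_of_degree_le (natDegree_C_mul_X_pow_le _ _)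
        (hR.trans (by norm_num))) (show 20 < Nat.card F by lia)) fun x ↦ by
        simp only [R, eval_add, eval_sub, eval_mul, eval_C, eval_pow, eval_X]
        rw [← ek, ← el, ← eg, ← eh]
        linear_combination key x - x ^ 12 * eg x
    simpa [coeff_eq_zero_of_natDegree_lt (hR.trans_lt (show 18 < 20 by norm_num))] using
      congr_arg (coeff · 20) hP
  have hfourth := Polynomial.eq_zero_of_forall_eval_eq_zero
    (C (cg 2 ^ 4) * X ^ 16 + C (cg 1 ^ 4 - ck 3) * X ^ 8 + C (cg 0 ^ 4 - ck 2) * X ^ 4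
      - C (ck 1) * X ^ 2 - C (ck 0) * X)
    (lt_of_le_of_lt (by compute_degree) (show 16 < Nat.card F by lia)) fun x ↦ by
      have := ek x
      simp only [eg, add_fourth, hcg3] at this
      simp only [eval_add, eval_sub, eval_mul, eval_C, eval_pow, eval_X]
      linear_combination this
  have hcg2 : cg 2 = 0 := by
    simpa [coeff_X_pow, coeff_X, coeff_C_mul, -map_mul, -map_add, -map_sub, -map_pow] using
      congr_arg (coeff · 16) hfourth
  have hck3 : cg 1 ^ 4 - ck 3 = 0 := by
    simpa [coeff_X_pow, coeff_X, coeff_C_mul, -map_mul, -map_add, -map_sub, -map_pow] using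
      congr_arg (coeff · 8) hfourth
  have hck1 : ck 1 = 0 := by
    simpa [coeff_X_pow, coeff_X, coeff_C_mul, -map_mul, -map_add, -map_sub, -map_pow] using
      congr_arg (coeff · 2) hfourth
  have hck0 : ck 0 = 0 := by
    simpa [coeff_X_pow, coeff_X, coeff_C_mul, -map_mul, -map_add, -map_sub, -map_pow] using
      congr_arg (coeff · 1) hfourth
  have hkey := Polynomial.eq_zero_of_forall_eval_eq_zero
    (C (cg 1 - ch 2) * X ^ 14 + C (cg 0 - cl 3) * X ^ 13 + C (-ch 1 - ch 2 * cl 3) * X ^ 12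
      + C (ck 3 - ch 0) * X ^ 11 + C (cg 1 * ck 3 - ch 1 * cl 3) * X ^ 10
      + C (cg 0 * ck 3 - cl 2 - ch 0 * cl 3) * X ^ 9 + C (-ch 2 * cl 2) * X ^ 8
      + C (ck 2 - cl 1) * X ^ 7 + C (cg 1 * ck 2 - ch 1 * cl 2 - ch 2 * cl 1) * X ^ 6
      + C (cg 0 * ck 2 - ch 0 * cl 2) * X ^ 5 + C (-ch 1 * cl 1) * X ^ 4
      + C (-ch 0 * cl 1) * X ^ 3)
    (lt_of_le_of_lt (by compute_degree) (show 14 < Nat.card F by lia)) fun x ↦ by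
      have := key x
      rw [show g x ^ 5 = g x * g x ^ 4 by ring, show h x ^ 3 = h x * h x ^ 2 by ring,
        show g x ^ 4 = _ from ek x, show h x ^ 2 = _ from el x, eg, eh, hch3, hcl0, hcg3, hcg2, hck1, hck0] at this
      simp only [eval_add, eval_mul, eval_C, eval_pow, eval_X]
      linear_combination this
  have h14 : cg 1 - ch 2 = 0 := by
    simpa [coeff_X_pow, coeff_X, coeff_C_mul, -map_mul, -map_add, -map_sub, -map_pow] using
      congr_arg (coeff · 14) hkey
  have h13 : cg 0 - cl 3 = 0 := by
    simpa [coeff_X_pow, coeff_X, coeff_C_mul, -map_mul, -map_add, -map_sub, -map_pow] using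
      congr_arg (coeff · 13) hkey
  have h12 : -ch 1 - ch 2 * cl 3 = 0 := by
    simpa [coeff_X_pow, coeff_X, coeff_C_mul, -map_mul, -map_add, -map_sub, -map_pow] using
      congr_arg (coeff · 12) hkey
  have h11 : ck 3 - ch 0 = 0 := by
    simpa [coeff_X_pow, coeff_X, coeff_C_mul, -map_mul, -map_add, -map_sub, -map_pow] using
      congr_arg (coeff · 11) hkey
  have h3 : -ch 0 * cl 1 = 0 := by
    simpa only [coeff_add, coeff_C_mul, coeff_X_pow, coeff_zero, Nat.reduceEqDiff, if_false,
      if_true, mul_zero, mul_one, zero_add] using congr_arg (coeff · 3) hkey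
  have hch0 : ch 0 = 0 :=
    pow_eq_zero_iff three_ne_zero |>.1 (by linear_combination -h3 + ch 0 * hcl1)
  have hcg1 : cg 1 = 0 :=
    pow_eq_zero_iff four_ne_zero |>.1 (by linear_combination hck3 + h11 + hch0)
  have hch2 : ch 2 = 0 := by linear_combination hcg1 - h14
  have hcg0 : cg 0 = 0 := by linear_combination h13 - hcl3 + ch 2 * hch2
  have hch1 : ch 1 = 0 := by linear_combination -h12 - cl 3 * hch2
  constructor
  · rw [eg, hcg0, hcg1, hcg2, hcg3]
    ring
  · rw [eh, hch0, hch1, hch2, hch3]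
    ring

end Binary

/-- If `f : F_{2^n} → F_{2^n}` (`n ≥ 5` odd) is such that `x ↦ f(x)³ + x³`
and `x ↦ f(x)⁵ + x⁵` are both additive, then `f` is the identity. -/
theorem additive_cubes_and_fifths_implies_id
    (n : ℕ) (hn : 5 ≤ n) (hodd : Odd n)
    (f : GaloisField 2 n → GaloisField 2 n)
    (h3 : ∀ x y : GaloisField 2 n,
      f (x + y) ^ 3 + (x + y) ^ 3 = (f x ^ 3 + x ^ 3) + (f y ^ 3 + y ^ 3))
    (h5 : ∀ x y : GaloisField 2 n,
      f (x + y) ^ 5 + (x + y) ^ 5 = (f x ^ 5 + x ^ 5) + (f y ^ 5 + y ^ 5)) :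
    ∀ x : GaloisField 2 n, f x = x := by
  have hcard : 32 ≤ Nat.card (GaloisField 2 n) := by
    rw [GaloisField.card 2 n (by lia)]
    exact Nat.pow_le_pow_right (n := 2) (by norm_num) hn
  intro x
  have h2 : (2 : GaloisField 2 n) = 0 := CharTwo.two_eq_zero
  obtain ⟨hg, hh⟩ := eq_zero_of_additive_of_cubic_identity hcard
    (g := fun x ↦ f x ^ 3 + x ^ 3) (h := fun x ↦ f x ^ 5 + x ^ 5) h3 h5 (fun x ↦ by
      have h4 : (f x ^ 3 + x ^ 3) ^ 4 = (f x ^ 3) ^ 4 + (x ^ 3) ^ 4 := add_pow_char_pow _ _ 2 2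
      have hsq : (f x ^ 5 + x ^ 5) ^ 2 = (f x ^ 5) ^ 2 + (x ^ 5) ^ 2 := add_pow_char_pow _ _ 2 1
      linear_combination (f x ^ 3 + 2 * x ^ 3) * h4 - (f x ^ 5 + 2 * x ^ 5) * hsq
        + (x ^ 12 * f x ^ 3 + x ^ 3 * f x ^ 12 - x ^ 10 * f x ^ 5 - x ^ 5 * f x ^ 10) * h2) x
  have hcube : f x ^ 3 = x ^ 3 := CharTwo.add_eq_zero.1 hg
  have hfifth : f x ^ 5 = x ^ 5 := CharTwo.add_eq_zero.1 hh
  rcases eq_or_ne x 0 with rfl | hx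
  · simpa using hcube
  · refine mul_right_cancel₀ (pow_ne_zero 5 hx) ?_
    linear_combination (f x ^ 3 + x ^ 3) * hcube - f x * hfifth
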